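/- For every integer n ≥ 1, the polynomial {n+1}·{n}!·{n}! divides {2n}! in the polynomial ring ℤ[s,t]; that is, there exists a polynomial P ∈ ℤ[s,t] with P·{n+1}·{n}!·{n}! = {2n}!. -/

import Mathlib

/-!
Write `[m]` for `lucas m`, `F m` for `lucasFactorial m` and `t` for `X 1`. The addition formula
`[m + k + 1] = [m + 1][k + 1] + t [m][k]` (`lucas_add`) yields a Pascal-type recursion, so the
Lucas analogues `B(m + k, k) = F (m + k) / (F m * F k)` of the binomial coefficients are polynomials
(`lucasFactorial_mul_dvd`). The addition formula also gives `[2n] = [n]([n + 1] + t [n - 1])`,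
whence the Lucas analogue of the Catalan number is
`B(2n, n) / [n + 1] = B(2n - 1, n - 1) + t B(2n - 1, n - 2)`, again a polynomial.
-/

open MvPolynomial

/-- The Lucas polynomials in ℤ[s,t], where `X 0` is `s` and `X 1` is `t`:
`{0} = 0`, `{1} = 1`, `{n} = s·{n-1} + t·{n-2}`. -/
noncomputable def lucas : ℕ → MvPolynomial (Fin 2) ℤ
  | 0 => 0
  | 1 => 1
  | n + 2 => X 0 * lucas (n + 1) + X 1 * lucas n

/-- The Lucas factorial: `{0}! = 1`, `{n}! = {n}·{n-1}!`. -/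
noncomputable def lucasFactorial : ℕ → MvPolynomial (Fin 2) ℤ
  | 0 => 1
  | n + 1 => lucas (n + 1) * lucasFactorial n

theorem lucas_add (m k : ℕ) :
    lucas (m + k + 1) = lucas (m + 1) * lucas (k + 1) + X 1 * lucas m * lucas k := by
  induction m using Nat.twoStepInduction with
  | zero => simp [lucas]
  | one =>
    rw [show 1 + k + 1 = k + 2 by ring]
    simp [lucas]
  | more m h0 h1 =>
    rw [show m + 1 + k + 1 = m + k + 2 by ring] at h1
    rw [show m + 2 + k + 1 = (m + k + 1) + 2 by ring, lucas, h1, h0,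
      show lucas (m + 2 + 1) = X 0 * lucas (m + 2) + X 1 * lucas (m + 1) from rfl,
      show lucas (m + 2) = X 0 * lucas (m + 1) + X 1 * lucas m from rfl]
    ring

/-- Integrality of the Lucas analogues of the binomial coefficients. -/
theorem lucasFactorial_mul_dvd (m k : ℕ) :
    ∃ B, B * lucasFactorial m * lucasFactorial k = lucasFactorial (m + k) := by
  induction m generalizing k with
  | zero => exact ⟨1, by simp [lucasFactorial]⟩
  | succ m ihm =>
    induction k with
    | zero => exact ⟨1, by simp [lucasFactorial]⟩
    | succ k ihk =>
      obtain ⟨A, hA⟩ := ihm (k + 1)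
      obtain ⟨B, hB⟩ := ihk
      have hadd := lucas_add (m + 1) k
      rw [show m + (k + 1) = m + k + 1 by ring] at hA
      rw [show m + 1 + k = m + k + 1 by ring] at hB hadd
      refine ⟨lucas (m + 2) * B + X 1 * lucas k * A, ?_⟩
      rw [show m + 1 + (k + 1) = (m + k + 1) + 1 by ring, lucasFactorial.eq_2 (m + k + 1), hadd]
      simp only [lucasFactorial] at hA hB ⊢
      linear_combination (lucas (m + 2) * lucas (k + 1)) * hB
        + (X 1 * lucas k * lucas (m + 1)) * hA

theorem lucasCatalan_dvd (n : ℕ) (hn : 1 ≤ n) :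
    ∃ P : MvPolynomial (Fin 2) ℤ,
      P * lucas (n + 1) * lucasFactorial n * lucasFactorial n =
        lucasFactorial (2 * n) := by
  obtain ⟨j, rfl⟩ : ∃ j, n = j + 1 := ⟨n - 1, by omega⟩
  obtain ⟨A, hA⟩ := lucasFactorial_mul_dvd j (j + 1)
  -- `D` is `B(2n - 1, n - 2)` with `n = j + 1`, read as `0` when `j = 0`.
  obtain ⟨D, hD⟩ : ∃ D, D * lucasFactorial j * lucasFactorial (j + 2)
      = lucas j * lucasFactorial (j + (j + 1)) := by
    cases j with
    | zero => exact ⟨0, by simp [lucas]⟩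
    | succ i =>
      obtain ⟨D, hD⟩ := lucasFactorial_mul_dvd i (i + 3)
      refine ⟨D, ?_⟩
      rw [show i + 1 + (i + 1 + 1) = i + (i + 3) by ring, ← hD, lucasFactorial.eq_2 i]
      ring
  have hadd := lucas_add (j + 1) j
  rw [show j + 1 + j + 1 = j + (j + 1) + 1 by ring] at hadd
  refine ⟨A + X 1 * D, ?_⟩
  rw [show 2 * (j + 1) = j + (j + 1) + 1 by ring, lucasFactorial.eq_2 (j + (j + 1)), hadd]
  simp only [lucasFactorial.eq_2 (j + 1), lucasFactorial.eq_2 j] at hA hD ⊢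
  linear_combination (lucas (j + 2) * lucas (j + 1)) * hA + (X 1 * lucas (j + 1)) * hD
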